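/- Let H be a cosemisimple Hopf algebra over an algebraically closed field k, and let V = ⊕_{α∈F} C_α be the direct sum of the simple subcoalgebras of H indexed by a finite subset F ⊆ Ĥ. Then for every n ≥ 1, dim_k V^n = Σ_{β∈F_n} (dim_k S_β)², where F_n = { β ∈ Ĥ : S_β is a direct summand of (⊕_{α∈F} S_α)^{⊗n} }. -/

import Mathlib

/-!
Background definitions: comodules over a Hopf algebra, simple comodules, direct
summands, supports, subcoalgebras, cosemisimplicity, Gelfand-Kirillov dimension,
and (measured) Grothendieck semirings of cosemisimple Hopf algebras.
-/

open TensorProduct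

/-- The data of a coaction of a Hopf algebra `H` on a `k`-vector space `X`:
a linear map `ρ : X → X ⊗ H`.  The comodule axioms are recorded separately in
`Comod.IsComodule`. -/
structure Comod (k : Type) [Field k] (H : Type) [Ring H] [HopfAlgebra k H] : Type 1 where
  X : Type
  [addCommGroup : AddCommGroup X]
  [module : Module k X]
  ρ : X →ₗ[k] X ⊗[k] H

attribute [instance] Comod.addCommGroup Comod.module

namespace Comod

variable {k : Type} [Field k] {H : Type} [Ring H] [HopfAlgebra k H]

/-- The trivial `H`-comodule `𝟏`, i.e. `k` with coaction `x ↦ x ⊗ 1`. -/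
noncomputable def unit (k : Type) [Field k] (H : Type) [Ring H] [HopfAlgebra k H] :
    Comod k H where
  X := k
  ρ := (TensorProduct.mk k k H).flip 1

/-- The regular comodule: `H` coacting on itself by comultiplication. -/
noncomputable def regular (k : Type) [Field k] (H : Type) [Ring H] [HopfAlgebra k H] :
    Comod k H where
  X := H
  ρ := Coalgebra.comul

/-- Tensor product of comodules: the coaction on `M ⊗ N` is
`(id ⊗ id ⊗ μ_H) ∘ (id ⊗ τ ⊗ id) ∘ (ρ_M ⊗ ρ_N)`. -/
noncomputable def tensor (M N : Comod k H) : Comod k H where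
  X := M.X ⊗[k] N.X
  ρ := (LinearMap.mul' k H).lTensor (M.X ⊗[k] N.X)
        ∘ₗ (TensorProduct.tensorTensorTensorComm k M.X H N.X H).toLinearMap
        ∘ₗ TensorProduct.map M.ρ N.ρ

/-- Binary direct sum of comodules. -/
noncomputable def dsum (M N : Comod k H) : Comod k H where
  X := M.X × N.X
  ρ := (LinearMap.inl k M.X N.X).rTensor H ∘ₗ M.ρ ∘ₗ LinearMap.fst k M.X N.X
     + (LinearMap.inr k M.X N.X).rTensor H ∘ₗ N.ρ ∘ₗ LinearMap.snd k M.X N.X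

/-- Finite direct sum of a family of comodules. -/
noncomputable def pi {ι : Type} [Fintype ι] (S : ι → Comod k H) : Comod k H where
  X := ∀ i, (S i).X
  ρ := letI := Classical.decEq ι
    ∑ i : ι, (LinearMap.single k (fun j => (S j).X) i).rTensor H ∘ₗ (S i).ρ
        ∘ₗ LinearMap.proj i

/-- `n`-th tensor power of a comodule (`M^{⊗0} = 𝟏`, `M^{⊗1} = M`). -/
noncomputable def tpow (M : Comod k H) : ℕ → Comod k H
  | 0 => unit k H
  | 1 => M
  | n + 2 => (M.tpow (n + 1)).tensor M

/-- A linear map is a map of comodules if it intertwines the coactions. -/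
def IsHom (M N : Comod k H) (f : M.X →ₗ[k] N.X) : Prop :=
  N.ρ ∘ₗ f = f.rTensor H ∘ₗ M.ρ

/-- Isomorphism of comodules. -/
def Iso (M N : Comod k H) : Prop :=
  ∃ e : M.X ≃ₗ[k] N.X, IsHom M N e.toLinearMap

/-- The comodule axioms (coassociativity and counitality) for a coaction. -/
def IsComodule (M : Comod k H) : Prop :=
  (M.ρ.rTensor H ∘ₗ M.ρ =
      (TensorProduct.assoc k M.X H H).symm.toLinearMap
        ∘ₗ (Coalgebra.comul (R := k) (A := H)).lTensor M.X ∘ₗ M.ρ) ∧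
  (TensorProduct.rid k M.X).toLinearMap
      ∘ₗ (Coalgebra.counit (R := k) (A := H)).lTensor M.X ∘ₗ M.ρ = LinearMap.id

/-- A subspace `N ⊆ M` is a subcomodule if the coaction restricts to `N ⊗ H`. -/
def IsSubcomodule (M : Comod k H) (N : Submodule k M.X) : Prop :=
  ∀ x ∈ N, M.ρ x ∈ LinearMap.range (N.subtype.rTensor H)

/-- Simple (hence finite-dimensional) comodules. -/
def IsSimple (M : Comod k H) : Prop :=
  M.IsComodule ∧ Nontrivial M.X ∧ FiniteDimensional k M.X ∧
    ∀ N : Submodule k M.X, M.IsSubcomodule N → N = ⊥ ∨ N = ⊤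

/-- `S` is a direct summand of `M` (as comodules): the inclusion splits. -/
def DirectSummand (S M : Comod k H) : Prop :=
  ∃ (i : S.X →ₗ[k] M.X) (p : M.X →ₗ[k] S.X),
    IsHom S M i ∧ IsHom M S p ∧ p ∘ₗ i = LinearMap.id

/-- `C` is the support of the comodule `M`: the (unique) minimal subspace
`C ⊆ H` with `ρ(M) ⊆ M ⊗ C`. -/
def IsSupport (M : Comod k H) (C : Submodule k H) : Prop :=
  (∀ x : M.X, M.ρ x ∈ LinearMap.range (C.subtype.lTensor M.X)) ∧
    ∀ C' : Submodule k H,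
      (∀ x : M.X, M.ρ x ∈ LinearMap.range (C'.subtype.lTensor M.X)) → C ≤ C'

end Comod

/-- A subspace `C ⊆ H` is a subcoalgebra if `Δ(C) ⊆ C ⊗ C`. -/
def IsSubcoalgebra (k : Type) [Field k] (H : Type) [Ring H] [HopfAlgebra k H]
    (C : Submodule k H) : Prop :=
  ∀ x ∈ C, Coalgebra.comul (R := k) x ∈
    LinearMap.range (TensorProduct.map C.subtype C.subtype)

/-- A simple subcoalgebra: a nonzero subcoalgebra with no proper nonzero
subcoalgebras. -/
def IsSimpleSubcoalgebra (k : Type) [Field k] (H : Type) [Ring H] [HopfAlgebra k H]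
    (C : Submodule k H) : Prop :=
  IsSubcoalgebra k H C ∧ C ≠ ⊥ ∧
    ∀ D : Submodule k H, D ≤ C → IsSubcoalgebra k H D → D = ⊥ ∨ D = C

/-- A Hopf algebra is cosemisimple if every subcomodule of every comodule is a
direct summand. -/
def IsCosemisimple (k : Type) [Field k] (H : Type) [Ring H] [HopfAlgebra k H] : Prop :=
  ∀ M : Comod k H, M.IsComodule →
    ∀ N : Submodule k M.X, M.IsSubcomodule N →
      ∃ N' : Submodule k M.X, M.IsSubcomodule N' ∧ IsCompl N N'

open scoped ENNReal in
/-- The Gelfand-Kirillov dimension of a `k`-algebra `A`: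
`sup_V limsup_n log(dim V^n)/log n` over finite-dimensional subspaces `V ⊆ A`
(for a finitely generated algebra this agrees with the value computed from any
finite-dimensional generating subspace containing `1`). -/
noncomputable def GKdim (k : Type) (A : Type) [Field k] [Ring A] [Algebra k A] : ℝ≥0∞ :=
  ⨆ (V : Submodule k A) (_ : FiniteDimensional k V),
    Filter.limsup
      (fun n : ℕ => ENNReal.ofReal
        (Real.log (Module.finrank k ↥(V ^ n)) / Real.log n)) Filter.atTop

/-- The (measured) Grothendieck semiring of a cosemisimple Hopf algebra `H`:
a commutative semiring `R` together with a class map `cls` on finite-dimensional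
`H`-comodules which is constant on isomorphism classes, additive on direct sums,
multiplicative on tensor products, sends `𝟏` to `1`, and induces a bijection
between iso-classes of finite-dimensional comodules and elements of `R`.
The dimension function `d_H` on `R_+(H)` is recovered as `cls M ↦ dim_k M`. -/
structure GrSemiring (k : Type) [Field k] (H : Type) [Ring H] [HopfAlgebra k H] :
    Type 1 where
  R : Type
  [commSemiring : CommSemiring R]
  cls : Comod k H → R
  cls_one : cls (Comod.unit k H) = 1
  cls_iso : ∀ M N : Comod k H, M.IsComodule → N.IsComodule →
    FiniteDimensional k M.X → FiniteDimensional k N.X → Comod.Iso M N → cls M = cls N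
  cls_dsum : ∀ M N : Comod k H, M.IsComodule → N.IsComodule →
    FiniteDimensional k M.X → FiniteDimensional k N.X →
      cls (M.dsum N) = cls M + cls N
  cls_tensor : ∀ M N : Comod k H, M.IsComodule → N.IsComodule →
    FiniteDimensional k M.X → FiniteDimensional k N.X →
      cls (M.tensor N) = cls M * cls N
  cls_surj : ∀ r : R, ∃ M : Comod k H, M.IsComodule ∧ FiniteDimensional k M.X ∧ cls M = r
  cls_inj : ∀ M N : Comod k H, M.IsComodule → N.IsComodule →
    FiniteDimensional k M.X → FiniteDimensional k N.X → cls M = cls N → Comod.Iso M N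

attribute [instance] GrSemiring.commSemiring

/-!
The matrix coefficients of a comodule `M` span a subspace `cf(M)` of `H`, and this is the only
possible support of `M`. It turns direct sums into sums and tensor products into products, so
`V = cf(⨁ S_α)` and `V ^ n = cf(T)` for `T = (⨁ S_α)^{⊗ n}`. Since `H` is cosemisimple, the
finite-dimensional comodule `T` is built from simple direct summands by splitting off complementary
subcomodules, whence `V ^ n` is the sum of the `C_β` with `S_β` a direct summand of `T`. The `C_β`
are independent, so their dimensions add up.
-/

section Slice

variable {k X Y V : Type*} [CommSemiring k] [AddCommMonoid X] [Module k X] [AddCommMonoid Y]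
  [Module k Y] [AddCommMonoid V] [Module k V]

/-- The slice map `φ ⊗ id : X ⊗ V → V` of a functional `φ` on `X`, as a bilinear map in `φ` and
the tensor. -/
noncomputable def slice : Module.Dual k X →ₗ[k] X ⊗[k] V →ₗ[k] V :=
  (LinearMap.rTensorHom V).compr₂ (TensorProduct.lid k V).toLinearMap

@[simp]
theorem slice_tmul (φ : Module.Dual k X) (x : X) (v : V) : slice φ (x ⊗ₜ[k] v) = φ x • v := by
  simp [slice]

theorem slice_rTensor (φ : Module.Dual k Y) (f : X →ₗ[k] Y) (z : X ⊗[k] V) :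
    slice φ (f.rTensor V z) = slice (φ ∘ₗ f) z := by
  induction z with
  | zero => simp only [map_zero]
  | tmul x v => simp
  | add z w hz hw => simp only [map_add, hz, hw]

theorem slice_lTensor_subtype_mem (D : Submodule k V) (φ : Module.Dual k X) (z : X ⊗[k] D) :
    slice φ (D.subtype.lTensor X z) ∈ D := by
  induction z with
  | zero => simp
  | tmul x d => simpa using D.smul_mem _ d.2
  | add z w hz hw => simpa only [map_add] using D.add_mem hz hw

theorem mem_range_lTensor_subtype_iff [Module.Free k X] {D : Submodule k V} {z : X ⊗[k] V} :
    z ∈ LinearMap.range (D.subtype.lTensor X) ↔ ∀ φ : Module.Dual k X, slice φ z ∈ D := by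
  refine ⟨?_, fun h => ?_⟩
  · rintro ⟨w, rfl⟩ φ
    exact slice_lTensor_subtype_mem D φ w
  · let b := Module.Free.chooseBasis k X
    obtain ⟨c, rfl⟩ := TensorProduct.eq_repr_basis_left b z
    have slice_coord (i) : slice (b.coord i) (c.sum fun j v => b j ⊗ₜ[k] v) = c i := by
      classical
      simp +contextual [Finsupp.sum, Finsupp.single_apply]
    exact Submodule.sum_mem _ fun i _ => ⟨b i ⊗ₜ ⟨c i, slice_coord i ▸ h (b.coord i)⟩, by simp⟩

end Slice

theorem finrank_iSup_of_iSupIndep {k V ι : Type*} [DivisionRing k] [AddCommGroup V] [Module k V]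
    [Fintype ι] {p : ι → Submodule k V} [∀ i, FiniteDimensional k (p i)] (h : iSupIndep p) :
    Module.finrank k ↥(⨆ i, p i) = ∑ i, Module.finrank k (p i) := by
  classical
  rw [Submodule.iSup_eq_range_dfinsupp_lsum,
    LinearMap.finrank_range_of_inj h.dfinsupp_lsum_injective]
  exact Module.finrank_directSum (R := k) fun i => ↥(p i)

section TensorMul

variable {k X Y A B : Type*} [CommSemiring k] [AddCommMonoid X] [Module k X] [AddCommMonoid Y]
  [Module k Y] [Semiring A] [Algebra k A] [Semiring B] [Algebra k B]

theorem rid_rTensor (f : X →ₗ[k] Y) (z : X ⊗[k] k) :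
    TensorProduct.rid k Y (f.rTensor k z) = f (TensorProduct.rid k X z) := by
  obtain ⟨x, rfl⟩ := (TensorProduct.rid k X).symm.surjective z
  simp

variable (k X Y A) in
/-- The map `(x ⊗ a) ⊗ (y ⊗ b) ↦ (x ⊗ y) ⊗ ab`. Composed with `ρ_M ⊗ ρ_N`, it is the coaction of
the tensor product `M ⊗ N` of comodules. -/
noncomputable def tensorMul : (X ⊗[k] A) ⊗[k] (Y ⊗[k] A) →ₗ[k] (X ⊗[k] Y) ⊗[k] A :=
  (LinearMap.mul' k A).lTensor (X ⊗[k] Y) ∘ₗ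
    (TensorProduct.tensorTensorTensorComm k X A Y A).toLinearMap

@[simp]
theorem tensorMul_tmul (x : X) (a : A) (y : Y) (b : A) :
    tensorMul k X Y A ((x ⊗ₜ a) ⊗ₜ (y ⊗ₜ b)) = (x ⊗ₜ y) ⊗ₜ (a * b) := by
  simp [tensorMul]

theorem lTensor_tensorMul (f : A →ₐ[k] B) (u : X ⊗[k] A) (v : Y ⊗[k] A) :
    f.toLinearMap.lTensor (X ⊗[k] Y) (tensorMul k X Y A (u ⊗ₜ v)) =
      tensorMul k X Y B (f.toLinearMap.lTensor X u ⊗ₜ f.toLinearMap.lTensor Y v) := by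
  suffices f.toLinearMap.lTensor (X ⊗[k] Y) ∘ₗ tensorMul k X Y A =
      tensorMul k X Y B ∘ₗ TensorProduct.map (f.toLinearMap.lTensor X) (f.toLinearMap.lTensor Y)
    from LinearMap.congr_fun this (u ⊗ₜ v)
  ext x a y b
  simp

theorem slice_tensorMul (φ : Module.Dual k X) (ψ : Module.Dual k Y) (u : X ⊗[k] A) (v : Y ⊗[k] A) :
    slice (TensorProduct.dualDistrib k X Y (φ ⊗ₜ ψ)) (tensorMul k X Y A (u ⊗ₜ v)) =
      slice φ u * slice ψ v := by
  suffices slice (TensorProduct.dualDistrib k X Y (φ ⊗ₜ ψ)) ∘ₗ tensorMul k X Y A =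
      LinearMap.mul' k A ∘ₗ TensorProduct.map (slice φ) (slice ψ)
    from LinearMap.congr_fun this (u ⊗ₜ v)
  ext x a y b
  simp [mul_smul, smul_comm (φ x)]

theorem rid_tensorMul (u : X ⊗[k] k) (v : Y ⊗[k] k) :
    TensorProduct.rid k (X ⊗[k] Y) (tensorMul k X Y k (u ⊗ₜ v)) =
      TensorProduct.rid k X u ⊗ₜ TensorProduct.rid k Y v := by
  obtain ⟨x, rfl⟩ := (TensorProduct.rid k X).symm.surjective u
  obtain ⟨y, rfl⟩ := (TensorProduct.rid k Y).symm.surjective v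
  simp

theorem assoc_tensorMul_tmul_mul (u : X ⊗[k] A) (v : Y ⊗[k] A) (a b : A) :
    TensorProduct.assoc k (X ⊗[k] Y) A A (tensorMul k X Y A (u ⊗ₜ v) ⊗ₜ (a * b)) =
      tensorMul k X Y (A ⊗[k] A)
        (TensorProduct.assoc k X A A (u ⊗ₜ a) ⊗ₜ TensorProduct.assoc k Y A A (v ⊗ₜ b)) := by
  suffices (TensorProduct.assoc k (X ⊗[k] Y) A A).toLinearMap ∘ₗ
      (TensorProduct.mk k _ A).flip (a * b) ∘ₗ tensorMul k X Y A =
      tensorMul k X Y (A ⊗[k] A) ∘ₗ TensorProduct.map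
        ((TensorProduct.assoc k X A A).toLinearMap ∘ₗ (TensorProduct.mk k _ A).flip a)
        ((TensorProduct.assoc k Y A A).toLinearMap ∘ₗ (TensorProduct.mk k _ A).flip b)
    from LinearMap.congr_fun this (u ⊗ₜ v)
  ext x c y d
  simp

theorem assoc_rTensor_tensorMul (ρ : X →ₗ[k] X ⊗[k] A) (σ : Y →ₗ[k] Y ⊗[k] A)
    (u : X ⊗[k] A) (v : Y ⊗[k] A) :
    TensorProduct.assoc k (X ⊗[k] Y) A A
        ((tensorMul k X Y A ∘ₗ TensorProduct.map ρ σ).rTensor A (tensorMul k X Y A (u ⊗ₜ v))) =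
      tensorMul k X Y (A ⊗[k] A) (TensorProduct.assoc k X A A (ρ.rTensor A u) ⊗ₜ
        TensorProduct.assoc k Y A A (σ.rTensor A v)) := by
  suffices (TensorProduct.assoc k (X ⊗[k] Y) A A).toLinearMap ∘ₗ
      (tensorMul k X Y A ∘ₗ TensorProduct.map ρ σ).rTensor A ∘ₗ tensorMul k X Y A =
      tensorMul k X Y (A ⊗[k] A) ∘ₗ TensorProduct.map
        ((TensorProduct.assoc k X A A).toLinearMap ∘ₗ ρ.rTensor A)
        ((TensorProduct.assoc k Y A A).toLinearMap ∘ₗ σ.rTensor A)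
    from LinearMap.congr_fun this (u ⊗ₜ v)
  ext x a y b
  simp [assoc_tensorMul_tmul_mul]

theorem tensorMul_mem_range_lTensor_mul {C D : Submodule k A} {u : X ⊗[k] A} {v : Y ⊗[k] A}
    (hu : u ∈ LinearMap.range (C.subtype.lTensor X))
    (hv : v ∈ LinearMap.range (D.subtype.lTensor Y)) :
    tensorMul k X Y A (u ⊗ₜ v) ∈ LinearMap.range ((C * D).subtype.lTensor (X ⊗[k] Y)) := by
  obtain ⟨u, rfl⟩ := hu
  obtain ⟨v, rfl⟩ := hv
  induction u with
  | zero => simp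
  | add u w hu hw =>
    simpa only [map_add, TensorProduct.add_tmul] using add_mem hu hw
  | tmul x c =>
    induction v with
    | zero => simp
    | add u w hu hw =>
      simpa only [map_add, TensorProduct.tmul_add] using add_mem hu hw
    | tmul y d =>
      exact ⟨(x ⊗ₜ y) ⊗ₜ ⟨c * d, Submodule.mul_mem_mul c.2 d.2⟩, by simp⟩

end TensorMul

namespace Comod

variable {k : Type} [Field k] {H : Type} [Ring H] [HopfAlgebra k H] {M N S T : Comod k H}

/-- The coefficient space `cf(M) ⊆ H` of a comodule, spanned by the matrix coefficients
`(φ ⊗ id)(ρ x)`. Any support of `M` is equal to it, see `IsSupport.eq_coeffSpace`. -/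
noncomputable def coeffSpace (M : Comod k H) : Submodule k H :=
  Submodule.map₂ slice ⊤ (LinearMap.range M.ρ)

theorem slice_mem_coeffSpace (φ : Module.Dual k M.X) (x : M.X) :
    slice φ (M.ρ x) ∈ M.coeffSpace :=
  Submodule.apply_mem_map₂ _ Submodule.mem_top (LinearMap.mem_range_self _ x)

theorem coeffSpace_le {D : Submodule k H} :
    M.coeffSpace ≤ D ↔ ∀ (φ : Module.Dual k M.X) (x : M.X), slice φ (M.ρ x) ∈ D := by
  simp [coeffSpace, Submodule.map₂_le]

theorem coeffSpace_le_iff_range {D : Submodule k H} :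
    M.coeffSpace ≤ D ↔ ∀ x, M.ρ x ∈ LinearMap.range (D.subtype.lTensor M.X) := by
  simp only [coeffSpace_le, mem_range_lTensor_subtype_iff]
  exact forall_comm

theorem IsSupport.eq_coeffSpace {D : Submodule k H} (h : M.IsSupport D) : D = M.coeffSpace :=
  le_antisymm (h.2 _ (coeffSpace_le_iff_range.1 le_rfl)) (coeffSpace_le_iff_range.2 h.1)

instance [FiniteDimensional k M.X] : FiniteDimensional k M.coeffSpace :=
  Module.Finite.iff_fg.2 <| (Module.Finite.fg_top).map₂ _ (Module.Finite.iff_fg.1 inferInstance)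

theorem IsHom.apply {f : S.X →ₗ[k] M.X} (hf : IsHom S M f) (x : S.X) :
    M.ρ (f x) = f.rTensor H (S.ρ x) :=
  LinearMap.congr_fun hf x

theorem IsHom.coeffSpace_le_of_injective {f : S.X →ₗ[k] M.X} (hf : IsHom S M f)
    (hinj : Function.Injective f) : S.coeffSpace ≤ M.coeffSpace := by
  refine coeffSpace_le.2 fun φ x => ?_
  obtain ⟨ψ, rfl⟩ := LinearMap.dualMap_surjective_of_injective hinj φ
  have := slice_mem_coeffSpace (M := M) ψ (f x)
  rwa [hf.apply, slice_rTensor] at this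

theorem IsHom.range_le_comap_coeffSpace {f : S.X →ₗ[k] M.X} (hf : IsHom S M f)
    (φ : Module.Dual k M.X) : LinearMap.range f ≤ S.coeffSpace.comap (slice φ ∘ₗ M.ρ) := by
  rintro _ ⟨x, rfl⟩
  rw [Submodule.mem_comap, LinearMap.comp_apply, hf.apply, slice_rTensor]
  exact slice_mem_coeffSpace _ x

theorem coeffSpace_le_iSup_of_iSup_range_eq_top {ι : Sort*} {S : ι → Comod k H}
    (f : ∀ i, (S i).X →ₗ[k] M.X) (hf : ∀ i, IsHom (S i) M (f i))
    (hrange : ⨆ i, LinearMap.range (f i) = ⊤) : M.coeffSpace ≤ ⨆ i, (S i).coeffSpace := by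
  refine coeffSpace_le.2 fun φ x => ?_
  have hx : x ∈ ⨆ i, LinearMap.range (f i) := hrange ▸ Submodule.mem_top
  exact iSup_le (fun i => ((hf i).range_le_comap_coeffSpace φ).trans
    (Submodule.comap_mono (le_iSup (fun j => (S j).coeffSpace) i))) hx

theorem DirectSummand.coeffSpace_le (h : DirectSummand S T) : S.coeffSpace ≤ T.coeffSpace := by
  obtain ⟨i, p, hi, -, hpi⟩ := h
  exact hi.coeffSpace_le_of_injective (Function.LeftInverse.injective (LinearMap.congr_fun hpi))

theorem IsHom.comp {f : S.X →ₗ[k] T.X} {g : T.X →ₗ[k] M.X} (hg : IsHom T M g)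
    (hf : IsHom S T f) : IsHom S M (g ∘ₗ f) := by
  unfold IsHom at *
  rw [← LinearMap.comp_assoc, hg, LinearMap.comp_assoc, hf, LinearMap.rTensor_comp,
    LinearMap.comp_assoc]

theorem DirectSummand.trans (hST : DirectSummand S T) (hTM : DirectSummand T M) :
    DirectSummand S M := by
  obtain ⟨i, p, hi, hp, hpi⟩ := hST
  obtain ⟨j, q, hj, hq, hqj⟩ := hTM
  refine ⟨j ∘ₗ i, p ∘ₗ q, hj.comp hi, hp.comp hq, ?_⟩
  rw [LinearMap.comp_assoc, ← LinearMap.comp_assoc i, hqj, LinearMap.id_comp, hpi]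

theorem IsHom.symm {e : S.X ≃ₗ[k] T.X} (h : IsHom S T e.toLinearMap) :
    IsHom T S e.symm.toLinearMap := by
  refine LinearMap.ext fun y => ?_
  have hρ : T.ρ y = e.toLinearMap.rTensor H (S.ρ (e.symm y)) := by simpa using h.apply (e.symm y)
  simp [hρ, ← LinearMap.rTensor_comp_apply]

theorem Iso.symm (h : Iso S T) : Iso T S :=
  let ⟨e, he⟩ := h
  ⟨e.symm, he.symm⟩

theorem Iso.directSummand (h : Iso S T) : DirectSummand S T :=
  let ⟨e, he⟩ := h
  ⟨e, e.symm, he, he.symm, e.symm_comp⟩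

theorem isComodule_iff : M.IsComodule ↔ ∀ x,
    TensorProduct.assoc k M.X H H (M.ρ.rTensor H (M.ρ x)) =
        (Coalgebra.comul (R := k) (A := H)).lTensor M.X (M.ρ x) ∧
      TensorProduct.rid k M.X ((Coalgebra.counit (R := k) (A := H)).lTensor M.X (M.ρ x)) = x := by
  simp [IsComodule, LinearMap.ext_iff, LinearEquiv.eq_symm_apply, forall_and]

theorem IsHom.assoc_rTensor_ρ {f : S.X →ₗ[k] M.X} (hf : IsHom S M f) (x : S.X) :
    TensorProduct.assoc k M.X H H (M.ρ.rTensor H (M.ρ (f x))) =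
      f.rTensor (H ⊗[k] H) (TensorProduct.assoc k S.X H H (S.ρ.rTensor H (S.ρ x))) := by
  rw [hf.apply, ← LinearMap.rTensor_comp_apply, hf, LinearMap.rTensor_comp_apply,
    LinearMap.rTensor_tensor]
  simp

theorem IsHom.lTensor_ρ {V : Type*} [AddCommGroup V] [Module k V] {f : S.X →ₗ[k] M.X}
    (hf : IsHom S M f) (g : H →ₗ[k] V) (x : S.X) :
    g.lTensor M.X (M.ρ (f x)) = f.rTensor V (g.lTensor S.X (S.ρ x)) := by
  rw [hf.apply, ← LinearMap.comp_apply, LinearMap.lTensor_comp_rTensor,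
    ← LinearMap.rTensor_comp_lTensor, LinearMap.comp_apply]

theorem IsComodule.of_injective {f : S.X →ₗ[k] M.X} (hM : M.IsComodule) (hf : IsHom S M f)
    (hinj : Function.Injective f) : S.IsComodule := by
  refine isComodule_iff.2 fun x => ?_
  obtain ⟨coassoc, counit⟩ := isComodule_iff.1 hM (f x)
  rw [hf.assoc_rTensor_ρ, hf.lTensor_ρ] at coassoc
  rw [hf.lTensor_ρ, rid_rTensor] at counit
  exact ⟨Module.Flat.rTensor_preserves_injective_linearMap (M := H ⊗[k] H) f hinj coassoc,
    hinj counit⟩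

theorem IsComodule.of_iSup_range_eq_top {ι : Sort*} {S : ι → Comod k H}
    (hS : ∀ i, (S i).IsComodule) (f : ∀ i, (S i).X →ₗ[k] M.X) (hf : ∀ i, IsHom (S i) M (f i))
    (hrange : ⨆ i, LinearMap.range (f i) = ⊤) : M.IsComodule := by
  constructor <;> refine LinearMap.eqLocus_eq_top.1 (top_le_iff.1 (hrange ▸ iSup_le fun i => ?_))
  all_goals
    rintro _ ⟨x, rfl⟩
    obtain ⟨coassoc, counit⟩ := isComodule_iff.1 (hS i) x
  · exact (LinearEquiv.eq_symm_apply _).2 <| by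
      simp only [LinearMap.comp_apply, (hf i).assoc_rTensor_ρ, (hf i).lTensor_ρ, coassoc]
  · simp [LinearMap.comp_apply, (hf i).lTensor_ρ, rid_rTensor, counit]

theorem isHom_pi_single {ι : Type} [Fintype ι] [DecidableEq ι] (S : ι → Comod k H) (i : ι) :
    IsHom (S i) (pi S) (LinearMap.single k (fun j => (S j).X) i) := by
  obtain rfl : ‹DecidableEq ι› = Classical.decEq ι := Subsingleton.elim _ _
  let _ := Classical.decEq ι
  have sum_single (x : (S i).X) :
      (∑ j, (LinearMap.single k (fun j => (S j).X) j).rTensor H ∘ₗ (S j).ρ ∘ₗ LinearMap.proj j)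
        (Pi.single i x) = (LinearMap.single k (fun j => (S j).X) i).rTensor H ((S i).ρ x) := by
    rw [LinearMap.sum_apply, Finset.sum_eq_single i]
    · simp
    · intro j _ hj
      simp [hj]
    · simp
  exact LinearMap.ext sum_single

theorem IsComodule.pi {ι : Type} [Fintype ι] {S : ι → Comod k H}
    (hS : ∀ i, (S i).IsComodule) : (Comod.pi S).IsComodule := by
  classical
  exact .of_iSup_range_eq_top hS _ (isHom_pi_single S) (LinearMap.iSup_range_single k _)

theorem coeffSpace_pi {ι : Type} [Fintype ι] (S : ι → Comod k H) :
    (Comod.pi S).coeffSpace = ⨆ i, (S i).coeffSpace := by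
  classical
  exact le_antisymm
    (coeffSpace_le_iSup_of_iSup_range_eq_top _ (isHom_pi_single S)
      (LinearMap.iSup_range_single k _))
    (iSup_le fun i => (isHom_pi_single S i).coeffSpace_le_of_injective
      (Pi.single_injective (M := fun j => (S j).X) i))

theorem isComodule_unit : (unit k H).IsComodule := by
  have coassoc (x : k) :
      TensorProduct.assoc k k H H (((TensorProduct.mk k k H).flip 1).rTensor H (x ⊗ₜ[k] 1)) =
        (Coalgebra.comul (R := k) (A := H)).lTensor k (x ⊗ₜ[k] 1) := by
    simp [Algebra.TensorProduct.one_def]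
  have counit (x : k) : TensorProduct.rid k k
      ((Coalgebra.counit (R := k) (A := H)).lTensor k (x ⊗ₜ[k] 1)) = x := by
    simp
  exact isComodule_iff.2 fun x => ⟨coassoc x, counit x⟩

theorem slice_unit_ρ (φ : Module.Dual k k) (x : k) :
    slice φ ((unit k H).ρ x) = algebraMap k H (φ x) :=
  (slice_tmul φ x 1).trans (Algebra.algebraMap_eq_smul_one _).symm

theorem coeffSpace_unit : (unit k H).coeffSpace = 1 := by
  refine le_antisymm
    (coeffSpace_le.2 fun φ x => Submodule.mem_one.2 ⟨φ x, (slice_unit_ρ φ x).symm⟩)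
    (Submodule.one_le.2 ?_)
  have slice_id : slice (LinearMap.id : Module.Dual k k) ((unit k H).ρ (1 : k)) = 1 :=
    (slice_unit_ρ _ _).trans (map_one _)
  exact Set.mem_of_eq_of_mem slice_id.symm (slice_mem_coeffSpace (M := unit k H) _ _)

theorem coeffSpace_tensor : (M.tensor N).coeffSpace = M.coeffSpace * N.coeffSpace := by
  refine le_antisymm (coeffSpace_le_iff_range.2 fun z => ?_) ?_
  · induction z using TensorProduct.induction_on with
    | zero => exact zero_mem _
    | add z w hz hw => exact (map_add (M.tensor N).ρ z w) ▸ add_mem hz hw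
    | tmul x y =>
      exact tensorMul_mem_range_lTensor_mul (coeffSpace_le_iff_range.1 le_rfl x)
        (coeffSpace_le_iff_range.1 le_rfl y)
  · rw [coeffSpace, coeffSpace, Submodule.map₂_eq_span_image2, Submodule.map₂_eq_span_image2,
      Submodule.span_mul_span, Submodule.span_le]
    rintro _ ⟨_, ⟨φ, -, _, ⟨x, rfl⟩, rfl⟩, _, ⟨ψ, -, _, ⟨y, rfl⟩, rfl⟩, rfl⟩
    change slice φ (M.ρ x) * slice ψ (N.ρ y) ∈ (M.tensor N).coeffSpace
    exact slice_tensorMul φ ψ (M.ρ x) (N.ρ y) ▸ slice_mem_coeffSpace (M := M.tensor N) _ (x ⊗ₜ y)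

theorem IsComodule.tensor (hM : M.IsComodule) (hN : N.IsComodule) : (M.tensor N).IsComodule := by
  rw [isComodule_iff] at hM hN
  constructor <;> refine TensorProduct.ext' fun x y => ?_
  · refine (LinearEquiv.eq_symm_apply _).2 ((assoc_rTensor_tensorMul M.ρ N.ρ _ _).trans ?_)
    rw [(hM x).1, (hN y).1]
    exact (lTensor_tensorMul (Bialgebra.comulAlgHom k H) _ _).symm
  · refine (congrArg _ (lTensor_tensorMul (Bialgebra.counitAlgHom k H) _ _)).trans
      ((rid_tensorMul _ _).trans ?_)
    exact congrArg₂ _ (hM x).2 (hN y).2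

theorem IsComodule.tpow (hM : M.IsComodule) : ∀ n, (M.tpow n).IsComodule
  | 0 => isComodule_unit
  | 1 => hM
  | n + 2 => (hM.tpow (n + 1)).tensor hM

theorem coeffSpace_tpow (M : Comod k H) : ∀ n, (M.tpow n).coeffSpace = M.coeffSpace ^ n
  | 0 => coeffSpace_unit.trans (pow_zero _).symm
  | 1 => (pow_one _).symm
  | n + 2 => by
    rw [pow_succ, ← coeffSpace_tpow M (n + 1)]
    exact coeffSpace_tensor

theorem finiteDimensional_tpow (h : FiniteDimensional k M.X) :
    ∀ n, FiniteDimensional k (M.tpow n).X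
  | 0 => inferInstanceAs (FiniteDimensional k k)
  | 1 => h
  | n + 2 =>
    have := finiteDimensional_tpow h (n + 1)
    inferInstanceAs (FiniteDimensional k ((M.tpow (n + 1)).X ⊗[k] M.X))

theorem rTensor_subtype_injective (P : Submodule k M.X) :
    Function.Injective (P.subtype.rTensor H) :=
  Module.Flat.rTensor_preserves_injective_linearMap _ P.injective_subtype

/-- The subcomodule `P ⊆ M` as a comodule. Since `H` is flat, `P ⊗ H` embeds into `M ⊗ H`, and the
coaction of `P` is the corestriction of that of `M`. -/
noncomputable def restrict (M : Comod k H) (P : Submodule k M.X) (hP : M.IsSubcomodule P) :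
    Comod k H where
  X := P
  ρ := (LinearEquiv.ofInjective _ (rTensor_subtype_injective P)).symm.toLinearMap ∘ₗ
    M.ρ.restrict hP

theorem isHom_subtype_restrict {P : Submodule k M.X} (hP : M.IsSubcomodule P) :
    IsHom (M.restrict P hP) M P.subtype :=
  LinearMap.ext fun x : P =>
    (LinearEquiv.ofInjective_symm_apply (f := P.subtype.rTensor H)
      (h := rTensor_subtype_injective P) ⟨M.ρ x, hP x x.2⟩).symm

theorem IsComodule.restrict (hM : M.IsComodule) {P : Submodule k M.X} (hP : M.IsSubcomodule P) :
    (M.restrict P hP).IsComodule :=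
  hM.of_injective (isHom_subtype_restrict hP) P.injective_subtype

theorem IsHom.of_comp_eq_id_of_comp_eq_zero {i : S.X →ₗ[k] M.X} {j : T.X →ₗ[k] M.X}
    {p : M.X →ₗ[k] S.X} (hi : IsHom S M i) (hj : IsHom T M j)
    (hij : LinearMap.range i ⊔ LinearMap.range j = ⊤) (hpi : p ∘ₗ i = LinearMap.id)
    (hpj : p ∘ₗ j = 0) : IsHom M S p := by
  refine LinearMap.eqLocus_eq_top.1 (top_le_iff.1 (hij ▸ sup_le ?_ ?_))
  · rintro _ ⟨x, rfl⟩
    have hpix : p (i x) = x := LinearMap.congr_fun hpi x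
    simp [hi.apply, hpix, ← LinearMap.rTensor_comp_apply, hpi]
  · rintro _ ⟨x, rfl⟩
    have hpjx : p (j x) = 0 := LinearMap.congr_fun hpj x
    simp [hj.apply, hpjx, ← LinearMap.rTensor_comp_apply, hpj]

theorem directSummand_restrict {P Q : Submodule k M.X} (hP : M.IsSubcomodule P)
    (hQ : M.IsSubcomodule Q) (h : IsCompl P Q) : DirectSummand (M.restrict P hP) M :=
  have hPM := isHom_subtype_restrict hP
  have sup_eq_top : LinearMap.range P.subtype ⊔ LinearMap.range Q.subtype = ⊤ := by
    simpa using h.sup_eq_top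
  have comp_subtype := P.projectionOnto_comp_subtype h
  ⟨P.subtype, P.projectionOnto Q h, hPM,
    hPM.of_comp_eq_id_of_comp_eq_zero (isHom_subtype_restrict hQ) sup_eq_top comp_subtype
      (LinearMap.ext (P.projectionOnto_apply_right h)), comp_subtype⟩

theorem exists_isCompl_of_not_isSimple (hcss : IsCosemisimple k H) (hM : M.IsComodule)
    [Nontrivial M.X] [FiniteDimensional k M.X] (hsimple : ¬ M.IsSimple) :
    ∃ P Q : Submodule k M.X,
      M.IsSubcomodule P ∧ M.IsSubcomodule Q ∧ IsCompl P Q ∧ P ≠ ⊤ ∧ Q ≠ ⊤ := by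
  obtain ⟨P, hP, hbot, htop⟩ :
      ∃ P : Submodule k M.X, M.IsSubcomodule P ∧ P ≠ ⊥ ∧ P ≠ ⊤ := by
    by_contra! h
    exact hsimple ⟨hM, ‹_›, ‹_›, fun P hP => or_iff_not_imp_left.2 (h P hP)⟩
  obtain ⟨Q, hQ, hPQ⟩ := hcss M hM P hP
  exact ⟨P, Q, hP, hQ, hPQ, htop, fun hQ' => hbot (eq_bot_of_isCompl_top (hQ' ▸ hPQ))⟩

theorem coeffSpace_le_sup_restrict {P Q : Submodule k M.X} (hP : M.IsSubcomodule P)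
    (hQ : M.IsSubcomodule Q) (h : Codisjoint P Q) :
    M.coeffSpace ≤ (M.restrict P hP).coeffSpace ⊔ (M.restrict Q hQ).coeffSpace := by
  refine coeffSpace_le.2 fun φ x => ?_
  have hx : x ∈ LinearMap.range P.subtype ⊔ LinearMap.range Q.subtype := by simp [h.eq_top]
  exact sup_le
    (((isHom_subtype_restrict hP).range_le_comap_coeffSpace φ).trans
      (Submodule.comap_mono le_sup_left))
    (((isHom_subtype_restrict hQ).range_le_comap_coeffSpace φ).trans
      (Submodule.comap_mono le_sup_right)) hx

theorem coeffSpace_le_iSup_directSummand (hcss : IsCosemisimple k H) {ι : Type*}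
    {S : ι → Comod k H} (hcomplete : ∀ M : Comod k H, M.IsSimple → ∃ α, Iso M (S α))
    (hT : T.IsComodule) [FiniteDimensional k T.X] :
    T.coeffSpace ≤ ⨆ β : {β // DirectSummand (S β) T}, (S β).coeffSpace := by
  induction hd : Module.finrank k T.X using Nat.strong_induction_on generalizing T with
  | h d ih =>
  have le_of_ne_top {P Q : Submodule k T.X} (hP : T.IsSubcomodule P) (hQ : T.IsSubcomodule Q)
      (hPQ : IsCompl P Q) (hne : P ≠ ⊤) : (T.restrict P hP).coeffSpace ≤
        ⨆ β : {β // DirectSummand (S β) T}, (S β).coeffSpace := by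
    have : FiniteDimensional k (T.restrict P hP).X := inferInstanceAs (FiniteDimensional k P)
    refine (ih _ (hd ▸ Submodule.finrank_lt hne) (hT.restrict hP) rfl).trans ?_
    exact iSup_le fun β => le_iSup_of_le
      ⟨β, β.2.trans (directSummand_restrict hP hQ hPQ)⟩ le_rfl
  cases subsingleton_or_nontrivial T.X with
  | inl _ =>
    refine coeffSpace_le.2 fun φ x => ?_
    rw [Subsingleton.elim x 0, map_zero, map_zero]
    exact zero_mem _
  | inr _ =>
    by_cases hsimple : T.IsSimple
    · obtain ⟨α, hα⟩ := hcomplete T hsimple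
      exact hα.directSummand.coeffSpace_le.trans
        (le_iSup_of_le ⟨α, hα.symm.directSummand⟩ le_rfl)
    · obtain ⟨P, Q, hP, hQ, hPQ, hP_top, hQ_top⟩ :=
        exists_isCompl_of_not_isSimple hcss hT hsimple
      refine (coeffSpace_le_sup_restrict hP hQ hPQ.codisjoint).trans ?_
      exact sup_le (le_of_ne_top hP hQ hPQ hP_top) (le_of_ne_top hQ hP hPQ.symm hQ_top)

end Comod

theorem stmt1_general (k : Type) [Field k] (H : Type) [Ring H] [HopfAlgebra k H]
    (hcss : IsCosemisimple k H)
    (ι : Type) (S : ι → Comod k H)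
    (hS : ∀ α, (S α).IsSimple)
    (hcomplete : ∀ M : Comod k H, M.IsSimple → ∃ α, Comod.Iso M (S α))
    (C : ι → Submodule k H)
    (hsupp : ∀ α, Comod.IsSupport (S α) (C α))
    (hindep : iSupIndep C)
    (F : Finset ι) (n : ℕ)
    (Fn : Finset ι)
    (hFn : ∀ β : ι, β ∈ Fn ↔ Comod.DirectSummand (S β)
        ((Comod.pi (fun a : ↥F => S a.1)).tpow n)) :
    Module.finrank k ↥((∑ α ∈ F, C α) ^ n) = ∑ β ∈ Fn, Module.finrank k (C β) := by
  obtain rfl : C = fun α => (S α).coeffSpace := funext fun α => (hsupp α).eq_coeffSpace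
  have hfin (α) : FiniteDimensional k (S α).X := (hS α).2.2.1
  set T := (Comod.pi fun a : F => S a).tpow n
  have hT : T.IsComodule := (Comod.IsComodule.pi fun a : F => (hS a).1).tpow n
  have hTfin : FiniteDimensional k T.X :=
    Comod.finiteDimensional_tpow (inferInstanceAs (FiniteDimensional k (∀ a : F, (S a).X))) n
  have hV : ∑ α ∈ F, (S α).coeffSpace = (Comod.pi fun a : F => S a).coeffSpace := by
    rw [Comod.coeffSpace_pi, iSup_subtype]
    exact Finset.sup_eq_iSup F _
  have hsummands : T.coeffSpace = ⨆ β : Fn, (S β).coeffSpace := by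
    refine le_antisymm ?_ (iSup_le fun β => ((hFn β).1 β.2).coeffSpace_le)
    exact (Comod.coeffSpace_le_iSup_directSummand hcss hcomplete hT).trans
      (iSup_le fun β => le_iSup_of_le ⟨β, (hFn β).2 β.2⟩ le_rfl)
  calc Module.finrank k ↥((∑ α ∈ F, (S α).coeffSpace) ^ n)
    _ = Module.finrank k ↥(⨆ β : Fn, (S β).coeffSpace) := by
      rw [hV, ← Comod.coeffSpace_tpow, hsummands]
    _ = ∑ β : Fn, Module.finrank k (S β).coeffSpace :=
      finrank_iSup_of_iSupIndep (hindep.comp Subtype.val_injective)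
    _ = ∑ β ∈ Fn, Module.finrank k (S β).coeffSpace :=
      Finset.sum_coe_sort Fn fun β => Module.finrank k (S β).coeffSpace

/-- Corollary 2.4 of the paper.  With `H`, the simple
comodules `S_α`, the simple subcoalgebras `C_α` and `V = ⊕_{α ∈ F} C_α` as
before, for every `n ≥ 1` one has
`dim_k V^n = Σ_{β ∈ F_n} (dim_k S_β)²`, where
`F_n = {β : S_β is a direct summand of (⊕_{α ∈ F} S_α)^{⊗ n}}`. -/
theorem stmt1 (k : Type) [Field k] [IsAlgClosed k]
    (H : Type) [Ring H] [HopfAlgebra k H]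
    (hcss : IsCosemisimple k H)
    (ι : Type) (S : ι → Comod k H)
    (hS : ∀ α, (S α).IsSimple)
    (hdistinct : ∀ α β, Comod.Iso (S α) (S β) → α = β)
    (hcomplete : ∀ M : Comod k H, M.IsSimple → ∃ α, Comod.Iso M (S α))
    (C : ι → Submodule k H)
    (hCsimple : ∀ α, IsSimpleSubcoalgebra k H (C α))
    (hsupp : ∀ α, Comod.IsSupport (S α) (C α))
    (hCdim : ∀ α, Module.finrank k ↥(C α) = (Module.finrank k (S α).X) ^ 2)
    (hindep : iSupIndep C) (hdecomp : (⨆ α, C α) = ⊤)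
    (F : Finset ι) (n : ℕ) (hn : 1 ≤ n)
    (Fn : Finset ι)
    (hFn : ∀ β : ι, β ∈ Fn ↔ Comod.DirectSummand (S β)
        ((Comod.pi (fun a : ↥F => S a.1)).tpow n)) :
    Module.finrank k ↥((∑ α ∈ F, C α) ^ n) =
      ∑ β ∈ Fn, (Module.finrank k (S β).X) ^ 2 := by
  simp only [← hCdim]
  exact stmt1_general k H hcss ι S hS hcomplete C hsupp hindep F n Fn hFn
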